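/- arXiv:1303.3543 — 2 statements merged into one kernel-verified Lean document; each statement's English description precedes it below -/
import Mathlib

section
/- Let {μ_y : y ∈ Y} be a σ-finite disintegration of μ with respect to (ν, φ) that is uniformly σ-finite. Then there is a sequence of Borel maps y ↦ K_n(y) from Y into the hyperspace K(X) of compact subsets of X such that μ_y(K_n(y)) < ∞ for all y and n, and μ_y(X \ ⋃_n K_n(y)) = 0 for all y. -/
open MeasureTheory TopologicalSpace

/-!
Code the points of a Polish space by sequences of indices into a dense sequence `u`. The partial
map `z ↦ lim u (z n)` extends to a continuous map on all of `ℕ → ℕ`, by ignoring any term of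
`u ∘ z` that jumps too far, and it has a Borel right inverse, which sends a point `x` to the least
indices of sufficiently good approximations of `x`. After refining the topology, the same holds for
each Borel set `B n`.

The boxes `{z | z ≤ N}` in `ℕ → ℕ` are compact and depend continuously on `N`. When `κ y` is finite
on `B n`, the bound `N y` can be chosen measurably in `y` so that only a part of `B n` of measure
at most `ε` has codes outside the box below `N y`. The images of these boxes are compact subsets of
`B n`, hence of finite measure, and taking `ε → 0` they exhaust `B n` up to a null set.
-/

open ProbabilityTheory Set Filter Topology Uniformity Function

section GreedyApprox

/-- The greedy approximation of a point with code `z` by terms of the sequence `u`: the next term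
`u (z (n + 1))` is taken only if it is close to the current approximation, which is kept
otherwise. This makes the sequence Cauchy for every code `z`. The tolerance `2 / 2 ^ n` lets through
every sequence whose `n`-th term is within `1 / 2 ^ n` of a fixed point. -/
noncomputable def greedyApprox {α : Type*} [Dist α] (u : ℕ → α) (z : ℕ → ℕ) : ℕ → α
  | 0 => u (z 0)
  | n + 1 =>
    open Classical in
    if dist (greedyApprox u z n) (u (z (n + 1))) ≤ 2 / 2 ^ n then u (z (n + 1))
    else greedyApprox u z n

theorem dist_greedyApprox_succ_le {α : Type*} [PseudoMetricSpace α] (u : ℕ → α) (z : ℕ → ℕ)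
    (n : ℕ) : dist (greedyApprox u z n) (greedyApprox u z (n + 1)) ≤ 2 / 2 ^ n := by
  rw [greedyApprox]
  split_ifs with h
  · exact h
  · rw [dist_self]
    positivity

theorem isLocallyConstant_greedyApprox {α : Type*} [Dist α] (u : ℕ → α) (n : ℕ) :
    IsLocallyConstant fun z => greedyApprox u z n := by
  classical
  have term (k : ℕ) : IsLocallyConstant fun z : ℕ → ℕ => u (z k) :=
    ((IsLocallyConstant.iff_continuous fun z : ℕ → ℕ => z k).2 (continuous_apply k)).comp u
  induction n with
  | zero => exact term 0
  | succ n ih =>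
    exact ih.comp₂ (term (n + 1)) fun a b => if dist a b ≤ 2 / 2 ^ n then b else a

theorem greedyApprox_eq_of_dist_le {α : Type*} [Dist α] {u : ℕ → α} {z : ℕ → ℕ}
    (h : ∀ n, dist (u (z n)) (u (z (n + 1))) ≤ 2 / 2 ^ n) (n : ℕ) :
    greedyApprox u z n = u (z n) := by
  induction n with
  | zero => rfl
  | succ n ih => rw [greedyApprox, ih, if_pos (h n)]

theorem exists_continuous_tendsto_greedyApprox {α : Type*} [PseudoMetricSpace α]
    [CompleteSpace α] (u : ℕ → α) :
    ∃ g : (ℕ → ℕ) → α, Continuous g ∧ ∀ z, Tendsto (greedyApprox u z) atTop (𝓝 (g z)) := by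
  have step_le (z n) : dist (greedyApprox u z n) (greedyApprox u z (n + 1)) ≤ 4 / 2 / 2 ^ n :=
    (dist_greedyApprox_succ_le u z n).trans_eq (by norm_num)
  choose g hg using fun z =>
    cauchySeq_tendsto_of_complete (cauchySeq_of_le_geometric_two (step_le z))
  have dist_le (z n) : dist (greedyApprox u z n) (g z) ≤ 4 / 2 ^ n :=
    dist_le_of_le_geometric_two_of_tendsto (step_le z) (hg z) n
  have bound_tendsto : Tendsto (fun n : ℕ => (4 : ℝ) / 2 ^ n) atTop (𝓝 0) :=
    tendsto_const_nhds.div_atTop (tendsto_pow_atTop_atTop_of_one_lt one_lt_two)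
  have uniform : TendstoUniformly (fun n z => greedyApprox u z n) g atTop := by
    refine Metric.tendstoUniformly_iff.2 fun ε hε => ?_
    filter_upwards [bound_tendsto.eventually_lt_const hε] with n hn z
    rw [dist_comm]
    exact (dist_le z n).trans_lt hn
  exact ⟨g, uniform.continuous
    (Frequently.of_forall fun n => (isLocallyConstant_greedyApprox u n).continuous), hg⟩

end GreedyApprox

section Coding

theorem exists_measurable_dist_lt_of_denseRange {α : Type*} [PseudoMetricSpace α]
    [MeasurableSpace α] [OpensMeasurableSpace α] {u : ℕ → α} (hu : DenseRange u)
    {r : ℕ → ℝ} (hr : ∀ n, 0 < r n) :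
    ∃ σ : α → ℕ → ℕ, Measurable σ ∧ ∀ x n, dist x (u (σ x n)) < r n := by
  classical
  have near (n x) : ∃ k, dist x (u k) < r n := hu.exists_dist_lt x (hr n)
  refine ⟨fun x n => Nat.find (near n x), measurable_pi_lambda _ fun n => ?_,
    fun x n => Nat.find_spec (near n x)⟩
  exact measurable_find (near n) fun k => Metric.isOpen_ball.measurableSet

theorem exists_continuous_leftInverse_measurable (α : Type*) [TopologicalSpace α] [PolishSpace α]
    [Nonempty α] [MeasurableSpace α] [OpensMeasurableSpace α] :
    ∃ (g : (ℕ → ℕ) → α) (σ : α → ℕ → ℕ), Continuous g ∧ Measurable σ ∧ LeftInverse g σ := by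
  let _ := upgradeIsCompletelyMetrizable α
  obtain ⟨u, hu⟩ := exists_dense_seq α
  obtain ⟨g, hg, tendsto_g⟩ := exists_continuous_tendsto_greedyApprox u
  obtain ⟨σ, hσ, dist_lt⟩ := exists_measurable_dist_lt_of_denseRange hu
    (r := fun n => 1 / 2 ^ n) (fun n => by positivity)
  refine ⟨g, σ, hg, hσ, fun x => ?_⟩
  have jump_le (n : ℕ) : dist (u (σ x n)) (u (σ x (n + 1))) ≤ 2 / 2 ^ n := calc
    _ ≤ dist x (u (σ x n)) + dist x (u (σ x (n + 1))) := dist_triangle_left _ _ _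
    _ ≤ 1 / 2 ^ n + 1 / 2 ^ (n + 1) := by gcongr <;> exact (dist_lt x _).le
    _ ≤ 1 / 2 ^ n + 1 / 2 ^ n := by gcongr <;> simp
    _ = 2 / 2 ^ n := by ring
  have tendsto_x : Tendsto (fun n => u (σ x n)) atTop (𝓝 x) := by
    refine tendsto_iff_dist_tendsto_zero.2 (squeeze_zero (fun _ => dist_nonneg)
      (fun n => (dist_comm _ _).trans_le (dist_lt x n).le) ?_)
    exact tendsto_const_nhds.div_atTop (tendsto_pow_atTop_atTop_of_one_lt one_lt_two)
  exact tendsto_nhds_unique (tendsto_g (σ x))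
    (tendsto_x.congr fun n => (greedyApprox_eq_of_dist_le jump_le n).symm)

theorem exists_leftInverse_measurable_continuous_comp {α X : Type*} [MeasurableSpace α]
    [StandardBorelSpace α] [Nonempty α] [TopologicalSpace X] [SecondCountableTopology X]
    [MeasurableSpace X] [OpensMeasurableSpace X] {f : α → X} (hf : Measurable f) :
    ∃ (g : (ℕ → ℕ) → α) (σ : α → ℕ → ℕ),
      Continuous (f ∘ g) ∧ Measurable σ ∧ LeftInverse g σ := by
  obtain ⟨t₀, hbt₀, ht₀⟩ := StandardBorelSpace.polish (α := α)
  obtain ⟨t, ht_le, hft, ht⟩ := hf.exists_continuous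
  have : @BorelSpace α t _ :=
    @BorelSpace.mk α t _ (hbt₀.measurable_eq.trans (borel_eq_borel_of_le ht ht₀ ht_le).symm)
  obtain ⟨g, σ, hg, hσ, hgσ⟩ := @exists_continuous_leftInverse_measurable α t ht _ _ inferInstance
  exact ⟨g, σ, hft.comp hg, hσ, hgσ⟩

end Coding

section LowerSegment

/-- The order interval `Set.Iic a` as a point of the hyperspace of nonempty compact sets. -/
def iicNonemptyCompacts {α : Type*} [TopologicalSpace α] [Preorder α] [OrderBot α]
    [CompactIccSpace α] (a : α) : NonemptyCompacts α where
  carrier := Iic a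
  isCompact' := Icc_bot (a := a) ▸ isCompact_Icc
  nonempty' := nonempty_Iic

theorem uniformContinuous_iicNonemptyCompacts {α : Type*} [UniformSpace α] [SemilatticeInf α]
    [OrderBot α] [CompactIccSpace α] (h_inf : UniformContinuous fun p : α × α => p.1 ⊓ p.2) :
    UniformContinuous (iicNonemptyCompacts (α := α)) := by
  refine ((𝓤 α).basis_sets.uniformContinuous_iff
    (𝓤 α).basis_sets.uniformity_nonemptyCompacts).2 fun V hV => ?_
  obtain ⟨D, hD, U, hU, hDU⟩ := entourageProd_subset (h_inf hV)
  have inf_mem {a b : α} (hab : (a, b) ∈ U) (c : α) : (c ⊓ a, c ⊓ b) ∈ V :=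
    @hDU ((c, a), (c, b)) ⟨refl_mem_uniformity hD, hab⟩
  have inf_mem_left {a b c : α} (hab : (a, b) ∈ U) (hc : c ≤ a) : (c, c ⊓ b) ∈ V := by
    simpa only [inf_eq_left.2 hc] using inf_mem hab c
  have inf_mem_right {a b c : α} (hab : (a, b) ∈ U) (hc : c ≤ b) : (c ⊓ a, c) ∈ V := by
    simpa only [inf_eq_left.2 hc] using inf_mem hab c
  exact ⟨U, hU, fun a b hab => ⟨fun c hc => ⟨c ⊓ b, inf_le_right, inf_mem_left hab hc⟩,
    fun c hc => ⟨c ⊓ a, inf_le_right, inf_mem_right hab hc⟩⟩⟩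

theorem uniformContinuous_inf_pi {ι : Type*} {α : ι → Type*} [∀ i, UniformSpace (α i)]
    [∀ i, SemilatticeInf (α i)]
    (h : ∀ i, UniformContinuous fun p : α i × α i => p.1 ⊓ p.2) :
    UniformContinuous fun p : (∀ i, α i) × (∀ i, α i) => p.1 ⊓ p.2 :=
  uniformContinuous_pi.2 fun i => (h i).comp
    ((Pi.uniformContinuous_proj α i).prodMap (Pi.uniformContinuous_proj α i))

theorem continuous_iicNonemptyCompacts_pi_nat {ι : Type*} :
    Continuous (iicNonemptyCompacts (α := ι → ℕ)) :=
  (uniformContinuous_iicNonemptyCompacts (uniformContinuous_inf_pi fun _ =>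
    DiscreteUniformity.uniformContinuous (ℕ × ℕ) _)).continuous

end LowerSegment

section Tightness

variable {Y : Type*} [MeasurableSpace Y]

theorem exists_measurable_nat_measure_lt {α : Type*} [MeasurableSpace α] (κ : Kernel Y α)
    [∀ y, IsFiniteMeasure (κ y)] {s : α → ℕ} (hs : Measurable s) {ε : ENNReal} (hε : 0 < ε) :
    ∃ n : Y → ℕ, Measurable n ∧ ∀ y, κ y {x | n y < s x} < ε := by
  classical
  have tail_meas (n : ℕ) : MeasurableSet {x | n < s x} := measurableSet_lt measurable_const hs
  have tail_lt (y : Y) : ∃ n : ℕ, κ y {x | n < s x} < ε := by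
    have tail_tendsto : Tendsto (fun n => κ y {x | n < s x}) atTop (𝓝 0) := by
      have inter_empty : ⋂ n, {x | n < s x} = ∅ :=
        eq_empty_of_forall_notMem fun x hx => lt_irrefl (s x) (mem_iInter.1 hx (s x))
      rw [← measure_empty (μ := κ y), ← inter_empty]
      exact tendsto_measure_iInter_atTop (fun n => (tail_meas n).nullMeasurableSet)
        (fun _ _ hmn _ hx => hmn.trans_lt hx) ⟨0, measure_ne_top _ _⟩
    exact (tail_tendsto.eventually_lt_const hε).exists
  refine ⟨fun y => Nat.find (tail_lt y), measurable_find tail_lt fun n => ?_,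
    fun y => Nat.find_spec (tail_lt y)⟩
  exact measurableSet_lt (κ.measurable_coe (tail_meas n)) measurable_const

theorem exists_measurable_nat_pi_measure_le {ι α : Type*} [Countable ι] [MeasurableSpace α]
    (κ : Kernel Y α) [∀ y, IsFiniteMeasure (κ y)] {σ : α → ι → ℕ} (hσ : Measurable σ)
    {ε : ENNReal} (hε : ε ≠ 0) :
    ∃ N : Y → ι → ℕ, Measurable N ∧ ∀ y, κ y {x | ¬ σ x ≤ N y} ≤ ε := by
  obtain ⟨δ, hδ, tsum_lt⟩ := ENNReal.exists_pos_sum_of_countable' hε ι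
  choose N hN tail_lt using fun i =>
    exists_measurable_nat_measure_lt κ (measurable_pi_iff.1 hσ i) (hδ i)
  refine ⟨fun y i => N i y, measurable_pi_iff.2 hN, fun y => ?_⟩
  calc κ y {x | ¬ σ x ≤ fun i => N i y}
      = κ y (⋃ i, {x | N i y < σ x i}) := by
        congr 1 with x
        simp only [Pi.le_def, not_forall, not_le, mem_ofPred_eq, mem_iUnion]
    _ ≤ ∑' i, κ y {x | N i y < σ x i} := measure_iUnion_le _
    _ ≤ ∑' i, δ i := ENNReal.tsum_le_tsum fun i => (tail_lt i y).le
    _ ≤ ε := tsum_lt.le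

variable {X : Type*} [TopologicalSpace X] [SecondCountableTopology X] [MeasurableSpace X]
  [OpensMeasurableSpace X] [MeasurableSpace (NonemptyCompacts X)] [BorelSpace (NonemptyCompacts X)]

theorem exists_measurable_compacts_subset_range_measure_compl_le {α : Type*} [MeasurableSpace α]
    [StandardBorelSpace α] [Nonempty α] (κ : Kernel Y α) [∀ y, IsFiniteMeasure (κ y)]
    {f : α → X} (hf : Measurable f) {ε : ENNReal} (hε : ε ≠ 0) :
    ∃ K : Y → NonemptyCompacts X, Measurable K ∧ (∀ y, (K y : Set X) ⊆ range f) ∧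
      ∀ y, κ y (f ⁻¹' K y)ᶜ ≤ ε := by
  obtain ⟨g, σ, hfg, hσ, hgσ⟩ := exists_leftInverse_measurable_continuous_comp hf
  obtain ⟨N, hN, measure_le⟩ := exists_measurable_nat_pi_measure_le κ hσ hε
  refine ⟨fun y => (iicNonemptyCompacts (N y)).map (f ∘ g) hfg, ?_, fun y => ?_, fun y => ?_⟩
  · exact (hfg.nonemptyCompacts_map.comp continuous_iicNonemptyCompacts_pi_nat).measurable.comp hN
  · rw [NonemptyCompacts.coe_map]
    exact (image_subset_range _ _).trans (range_comp_subset_range g f)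
  · refine (measure_mono fun x hx => mt (fun hle => ?_) hx).trans (measure_le y)
    exact ⟨σ x, hle, congrArg f (hgσ x)⟩

variable [StandardBorelSpace X]

theorem exists_measurable_compacts_measure_diff_le (κ : Kernel Y X) {B : Set X}
    (hB : MeasurableSet B) (hB_ne : B.Nonempty) (hB_lt : ∀ y, κ y B < ⊤) {ε : ENNReal}
    (hε : ε ≠ 0) :
    ∃ K : Y → NonemptyCompacts X, Measurable K ∧ (∀ y, (K y : Set X) ⊆ B) ∧
      ∀ y, κ y (B \ K y) ≤ ε := by
  have := hB.standardBorel
  have := hB_ne.to_subtype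
  let κB := κ.comapRight (MeasurableEmbedding.subtype_coe hB)
  have κB_apply (y : Y) (s : Set B) : κB y s = κ y (Subtype.val '' s) := by
    rw [Kernel.comapRight_apply, (MeasurableEmbedding.subtype_coe hB).comap_apply]
  have (y : Y) : IsFiniteMeasure (κB y) :=
    ⟨by simpa only [κB_apply, image_univ, Subtype.range_coe] using hB_lt y⟩
  obtain ⟨K, hK, K_subset, measure_le⟩ :=
    exists_measurable_compacts_subset_range_measure_compl_le κB measurable_subtype_coe hε
  refine ⟨K, hK, fun y => (K_subset y).trans_eq Subtype.range_coe, fun y => ?_⟩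
  simpa only [κB_apply, ← preimage_compl, Subtype.image_preimage_coe, sdiff_eq] using measure_le y

theorem exists_measurable_compacts_measure_diff_iUnion_eq_zero (κ : Kernel Y X) {B : Set X}
    (hB : MeasurableSet B) (hB_ne : B.Nonempty) (hB_lt : ∀ y, κ y B < ⊤) :
    ∃ K : ℕ → Y → NonemptyCompacts X, (∀ m, Measurable (K m)) ∧
      (∀ m y, (K m y : Set X) ⊆ B) ∧ ∀ y, κ y (B \ ⋃ m, K m y) = 0 := by
  choose K hK K_subset measure_le using fun m : ℕ =>
    exists_measurable_compacts_measure_diff_le κ hB hB_ne hB_lt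
      (ENNReal.inv_ne_zero.2 (ENNReal.natCast_ne_top m))
  refine ⟨K, hK, K_subset, fun y => le_zero_iff.1 ?_⟩
  refine ge_of_tendsto' ENNReal.tendsto_inv_nat_nhds_zero fun m => ?_
  exact (measure_mono (sdiff_subset_sdiff_right (subset_iUnion _ m))).trans (measure_le m y)

theorem exists_compact_selections_of_uniformly_sigmaFinite_general [Nonempty X] (κ : Kernel Y X)
    (B : ℕ → Set X) (hB : ∀ n, MeasurableSet (B n)) (hBfin : ∀ n y, κ y (B n) < ⊤)
    (hBcover : ∀ y, κ y (⋃ n, B n)ᶜ = 0) :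
    ∃ K : ℕ → Y → NonemptyCompacts X,
      (∀ n, Measurable (K n)) ∧
      (∀ n y, κ y (K n y : Set X) < ⊤) ∧
      (∀ y, κ y (⋃ n, (K n y : Set X))ᶜ = 0) := by
  let x₀ := Classical.arbitrary X
  have singleton_lt (y : Y) : κ y {x₀} < ⊤ := by
    by_cases hx₀ : x₀ ∈ ⋃ n, B n
    · obtain ⟨n, hn⟩ := mem_iUnion.1 hx₀
      exact (measure_mono (singleton_subset_iff.2 hn)).trans_lt (hBfin n y)
    · rw [measure_mono_null (singleton_subset_iff.2 hx₀) (hBcover y)]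
      exact ENNReal.zero_lt_top
  -- Some `B n` may be empty, whereas each `K n y` has to be nonempty.
  have insert_lt (n : ℕ) (y : Y) : κ y (insert x₀ (B n)) < ⊤ :=
    measure_union_lt_top (singleton_lt y) (hBfin n y)
  choose K hK K_subset diff_null using fun n =>
    exists_measurable_compacts_measure_diff_iUnion_eq_zero κ ((hB n).insert x₀)
      (insert_nonempty x₀ (B n)) (insert_lt n)
  refine ⟨fun n => K n.unpair.1 n.unpair.2, fun n => hK _ _,
    fun n y => (measure_mono (K_subset _ _ y)).trans_lt (insert_lt _ y), fun y => ?_⟩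
  have compl_subset : (⋃ n : ℕ, (K n.unpair.1 n.unpair.2 y : Set X))ᶜ ⊆
      (⋃ n, B n)ᶜ ∪ ⋃ n, insert x₀ (B n) \ ⋃ m, K n m y := by
    rw [iUnion_unpair fun n m => (K n m y : Set X)]
    refine fun x hx => or_iff_not_imp_left.2 fun hxB => ?_
    obtain ⟨n, hn⟩ := mem_iUnion.1 (notMem_compl_iff.1 hxB)
    exact mem_iUnion.2 ⟨n, Or.inr hn, fun hxK => hx (mem_iUnion_of_mem n hxK)⟩
  exact measure_mono_null compl_subset
    (measure_union_null (hBcover y) (measure_iUnion_null fun n => diff_null n y))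

end Tightness

/-- If `{μy y}` is a uniformly σ-finite disintegration of `μ` with respect to `(ν, φ)`,
then there is a sequence of Borel maps `y ↦ K n y` into the hyperspace `K(X)` of
(nonempty) compact subsets of `X` such that `μy y (K n y) < ∞` for all `y, n`, and
`μy y ((⋃ n, K n y)ᶜ) = 0` for all `y`. -/
theorem exists_compact_selections_of_uniformly_sigmaFinite
    {X Y : Type*} [MetricSpace X] [PolishSpace X] [Nonempty X]
    [MeasurableSpace X] [BorelSpace X]
    [MeasurableSpace Y] [StandardBorelSpace Y]
    [MeasurableSpace (NonemptyCompacts X)] [BorelSpace (NonemptyCompacts X)]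
    (φ : X → Y) (hφ : Measurable φ)
    (μ : Measure X) (ν : Measure Y) (μy : Y → Measure X)
    (hmeas : ∀ B : Set X, MeasurableSet B → Measurable fun y => μy y B)
    (hconc : ∀ y : Y, μy y ((φ ⁻¹' {y})ᶜ) = 0)
    (hint : ∀ B : Set X, MeasurableSet B → μ B = ∫⁻ y, μy y B ∂ν)
    (hsf : ∀ y : Y, SigmaFinite (μy y))
    (B : ℕ → Set X) (hB : ∀ n, MeasurableSet (B n))
    (hBfin : ∀ n, ∀ y : Y, μy y (B n) < ⊤)
    (hBcover : ∀ y : Y, μy y ((⋃ n, B n)ᶜ) = 0) :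
    ∃ K : ℕ → Y → NonemptyCompacts X,
      (∀ n, Measurable (K n)) ∧
      (∀ n, ∀ y : Y, μy y (K n y : Set X) < ⊤) ∧
      (∀ y : Y, μy y ((⋃ n, (K n y : Set X))ᶜ) = 0) :=
  exists_compact_selections_of_uniformly_sigmaFinite_general
    ⟨μy, Measure.measurable_of_measurable_coe μy hmeas⟩ B hB hBfin hBcover
end

section
/- Let {μ_y : y ∈ Y} be a σ-finite disintegration of μ with respect to (ν, φ) such that each μ_y is purely atomic. If the map (y, K) ↦ μ_y(K) from Y × K(X) to [0,∞] is Borel measurable, then {μ_y} is uniformly σ-finite. -/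
open MeasureTheory TopologicalSpace

/-!
Since `μy y` lives on the fibre of `φ` over `y`, its atoms are the points of that fibre in the
measurable set `A = {x | 0 < μy (φ x) {x}}`, and they are countably many. By Lusin–Novikov, `A` is a
countable union of measurable sets on which `φ` is injective. Each of them meets a fibre in at most
one point, to which the σ-finite measure `μy y` gives finite mass.

For Lusin–Novikov, call a finite family of sets large if some fibre meets all its members even after
a set from the σ-ideal of the theorem is removed from each of them. By Lusin separation some fibre
then meets each member in two points, so that every member can be split into two small disjoint
pieces which again form a large family. Were the whole space outside the σ-ideal, iterating this
would yield a Cantor scheme all of whose branches end in a single fibre, which would be uncountable.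
-/

section LusinNovikov

open Set Filter
open scoped ENNReal Topology

section SigmaInjOn

variable {P Y : Type*} [MeasurableSpace P] {φ : P → Y} {s t : Set P}

/-- `φ` is σ-injective on `s`: countably many measurable sets, on each of which `φ` is injective,
cover `s`. The set `s` need not be measurable, so that these sets form a σ-ideal. -/
def SigmaInjOn (φ : P → Y) (s : Set P) : Prop :=
  ∃ B : ℕ → Set P, (∀ n, MeasurableSet (B n)) ∧ (∀ n, InjOn φ (B n)) ∧ s ⊆ ⋃ n, B n

namespace SigmaInjOn

theorem mono (ht : SigmaInjOn φ t) (hst : s ⊆ t) : SigmaInjOn φ s := by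
  obtain ⟨B, hBm, hBi, htB⟩ := ht
  exact ⟨B, hBm, hBi, hst.trans htB⟩

theorem of_injOn (hs : MeasurableSet s) (h : InjOn φ s) : SigmaInjOn φ s :=
  ⟨fun _ => s, fun _ => hs, fun _ => h, (iUnion_const s).superset⟩

theorem empty : SigmaInjOn φ ∅ :=
  of_injOn .empty (injOn_empty φ)

theorem iUnion {ι : Type*} [Countable ι] {s : ι → Set P} (h : ∀ i, SigmaInjOn φ (s i)) :
    SigmaInjOn φ (⋃ i, s i) := by
  choose B hBm hBi hsB using h
  cases isEmpty_or_nonempty ι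
  · simpa only [iUnion_of_empty] using empty
  · obtain ⟨e, he⟩ := exists_surjective_nat (ι × ℕ)
    refine ⟨fun n => B (e n).1 (e n).2, fun n => hBm _ _, fun n => hBi _ _, ?_⟩
    rw [he.iUnion_comp fun p : ι × ℕ => B p.1 p.2, iUnion_prod']
    exact iUnion_mono hsB

theorem union (hs : SigmaInjOn φ s) (ht : SigmaInjOn φ t) : SigmaInjOn φ (s ∪ t) := by
  rw [union_eq_iUnion]
  exact iUnion (Bool.forall_bool.2 ⟨ht, hs⟩)

theorem exists_measurableSet_superset (hs : SigmaInjOn φ s) :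
    ∃ t, s ⊆ t ∧ MeasurableSet t ∧ SigmaInjOn φ t := by
  obtain ⟨B, hBm, hBi, hsB⟩ := hs
  exact ⟨⋃ n, B n, hsB, .iUnion hBm, B, hBm, hBi, Subset.rfl⟩

theorem of_comp {Z : Type*} {g : Y → Z} (h : SigmaInjOn (g ∘ φ) s) : SigmaInjOn φ s := by
  obtain ⟨B, hBm, hBi, hsB⟩ := h
  exact ⟨B, hBm, fun n => (hBi n).of_comp, hsB⟩

end SigmaInjOn

end SigmaInjOn

section FibrewiseLarge

variable {P Y ι κ : Type*} [MeasurableSpace P] {φ : P → Y}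

/-- A family `C` is fibrewise large if some fibre of `φ` meets all members of `C`, and this persists
when a set on which `φ` is σ-injective is removed from each member. -/
def FibrewiseLarge (φ : P → Y) (C : ι → Set P) : Prop :=
  ∀ R : ι → Set P, (∀ i, SigmaInjOn φ (R i)) → (⋂ i, φ '' (C i \ R i)).Nonempty

theorem fibrewiseLarge_const [Countable ι] {s : Set P} (hs : ¬ SigmaInjOn φ s) :
    FibrewiseLarge φ fun _ : ι => s := by
  intro R hR
  obtain ⟨x, hxs, hxR⟩ : (s \ ⋃ i, R i).Nonempty :=
    sdiff_nonempty.2 fun hsR => hs ((SigmaInjOn.iUnion hR).mono hsR)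
  rw [mem_iUnion, not_exists] at hxR
  exact ⟨φ x, mem_iInter.2 fun i => mem_image_of_mem φ ⟨hxs, hxR i⟩⟩

namespace FibrewiseLarge

variable {C : ι → Set P}

theorem nonempty (hC : FibrewiseLarge φ C) : (⋂ i, φ '' C i).Nonempty := by
  simpa only [sdiff_empty] using hC (fun _ => ∅) fun _ => .empty

theorem diff (hC : FibrewiseLarge φ C) {R : ι → Set P} (hR : ∀ i, SigmaInjOn φ (R i)) :
    FibrewiseLarge φ fun i => C i \ R i := by
  intro R' hR'
  simpa only [sdiff_sdiff] using hC (fun i => R i ∪ R' i) fun i => (hR i).union (hR' i)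

theorem comp [Countable κ] (hC : FibrewiseLarge φ C) (f : κ → ι) :
    FibrewiseLarge φ (C ∘ f) := by
  intro R hR
  obtain ⟨y, hy⟩ := hC (fun i => ⋃ k : {k // f k = i}, R k) fun i => .iUnion fun k => hR k
  refine ⟨y, mem_iInter.2 fun k => ?_⟩
  have hRk : R k ⊆ ⋃ k' : {k' // f k' = f k}, R k' :=
    subset_iUnion (fun k' : {k' // f k' = f k} => R k') ⟨k, rfl⟩
  exact image_mono (sdiff_subset_sdiff_right hRk) (mem_iInter.1 hy (f k))

end FibrewiseLarge

end FibrewiseLarge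

section Separation

variable {Y : Type*} [TopologicalSpace Y] [PolishSpace Y] [MeasurableSpace Y] [BorelSpace Y]

theorem exists_measurableSet_superset_iInter_eq_empty {ι : Type*} [Finite ι] {A : ι → Set Y}
    (hA : ∀ i, AnalyticSet (A i)) (hempty : ⋂ i, A i = ∅) :
    ∃ V : ι → Set Y, (∀ i, MeasurableSet (V i)) ∧ (∀ i, A i ⊆ V i) ∧ ⋂ i, V i = ∅ := by
  classical
  have := Fintype.ofFinite ι
  suffices h : ∀ s : Finset ι, ∃ V : ι → Set Y, (∀ i ∈ s, MeasurableSet (V i)) ∧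
      (∀ i, AnalyticSet (V i)) ∧ (∀ i, A i ⊆ V i) ∧ ⋂ i, V i = ∅ by
    obtain ⟨V, hVm, -, hAV, hV⟩ := h Finset.univ
    exact ⟨V, fun i => hVm i (Finset.mem_univ i), hAV, hV⟩
  intro s
  induction s using Finset.induction_on with
  | empty => exact ⟨A, by simp, hA, fun _ => Subset.rfl, hempty⟩
  | insert a s _ ih =>
    obtain ⟨V, hVm, hVa, hAV, hV⟩ := ih
    have hothers : AnalyticSet (⋂ i : {i // i ≠ a}, V i) := by
      cases isEmpty_or_nonempty {i // i ≠ a}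
      · simpa only [iInter_of_empty] using isClosed_univ.analyticSet
      · exact .iInter fun i => hVa i
    have hsplit (W : Set Y) : ⋂ i, Function.update V a W i = W ∩ ⋂ i : {i // i ≠ a}, V i := by
      ext y
      simp [Function.forall_update_iff V fun _ U => y ∈ U]
    have hdisj : Disjoint (V a) (⋂ i : {i // i ≠ a}, V i) := by
      rw [disjoint_iff_inter_eq_empty, ← hsplit, Function.update_eq_self, hV]
    obtain ⟨W, hVW, hothersW, hWm⟩ := (hVa a).measurablySeparable hothers hdisj
    refine ⟨Function.update V a W, ?_, ?_, ?_, ?_⟩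
    · rw [Function.forall_update_iff V fun i U => i ∈ insert a s → MeasurableSet U]
      exact ⟨fun _ => hWm, fun i hi his => hVm i (Finset.mem_of_mem_insert_of_ne his hi)⟩
    · rw [Function.forall_update_iff V fun _ U => AnalyticSet U]
      exact ⟨hWm.analyticSet, fun i _ => hVa i⟩
    · rw [Function.forall_update_iff V fun i U => A i ⊆ U]
      exact ⟨(hAV a).trans hVW, fun i _ => hAV i⟩
    · rw [hsplit, inter_comm, ← disjoint_iff_inter_eq_empty]
      exact hothersW

theorem analyticSet_setOf_nontrivial_inter_preimage {P : Type*} [MeasurableSpace P]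
    [StandardBorelSpace P] {φ : P → Y} (hφ : Measurable φ) {s : Set P} (hs : MeasurableSet s) :
    AnalyticSet {y | (s ∩ φ ⁻¹' {y}).Nontrivial} := by
  have hpairs : MeasurableSet {p : P × P | p ∈ s ×ˢ s ∧ p.1 ≠ p.2 ∧ φ p.1 = φ p.2} :=
    (hs.prod hs).inter <| (measurableSet_eq_fun measurable_fst measurable_snd).compl.inter <|
      measurableSet_eq_fun (hφ.comp measurable_fst) (hφ.comp measurable_snd)
  convert hpairs.analyticSet_image (hφ.comp measurable_fst) using 1
  ext y
  constructor
  · rintro ⟨x, ⟨hx, rfl⟩, x', ⟨hx', hxx'⟩, hne⟩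
    exact ⟨(x, x'), ⟨⟨hx, hx'⟩, hne, hxx'.symm⟩, rfl⟩
  · rintro ⟨⟨x, x'⟩, ⟨⟨hx, hx'⟩, hne, hxx'⟩, rfl⟩
    exact ⟨x, ⟨hx, rfl⟩, x', ⟨hx', hxx'.symm⟩, hne⟩

end Separation

namespace FibrewiseLarge

variable {P Y ι κ : Type*} [MeasurableSpace P] [StandardBorelSpace P] [TopologicalSpace Y]
  [PolishSpace Y] [MeasurableSpace Y] [BorelSpace Y] [Finite ι] {φ : P → Y} {C : ι → Set P}

theorem exists_forall_nontrivial (hC : FibrewiseLarge φ C) (hφ : Measurable φ)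
    (hCm : ∀ i, MeasurableSet (C i)) : ∃ y, ∀ i, (C i ∩ φ ⁻¹' {y}).Nontrivial := by
  by_contra! hsub
  have hempty : ⋂ i, {y | (C i ∩ φ ⁻¹' {y}).Nontrivial} = ∅ := by
    simpa [eq_empty_iff_forall_notMem] using hsub
  obtain ⟨V, hVm, hCV, hV⟩ := exists_measurableSet_superset_iInter_eq_empty
    (fun i => analyticSet_setOf_nontrivial_inter_preimage hφ (hCm i)) hempty
  have hR : ∀ i, SigmaInjOn φ (C i \ φ ⁻¹' V i) := by
    refine fun i => .of_injOn ((hCm i).diff (hφ (hVm i))) ?_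
    intro x hx x' hx' hxx'
    by_contra hne
    exact hx.2 (hCV i ⟨x, ⟨hx.1, rfl⟩, x', ⟨hx'.1, hxx'.symm⟩, hne⟩)
  obtain ⟨y, hy⟩ := hC _ hR
  have hyV : y ∈ ⋂ i, V i := by
    refine mem_iInter.2 fun i => ?_
    obtain ⟨x, ⟨hx, hxR⟩, rfl⟩ := mem_iInter.1 hy i
    exact not_not.1 fun hxV => hxR ⟨hx, hxV⟩
  exact notMem_empty y (hV ▸ hyV)

theorem exists_inter [Countable κ] (hC : FibrewiseLarge φ C) (hφ : Measurable φ)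
    (hCm : ∀ i, MeasurableSet (C i)) {B : κ → Bool → Set P}
    (hB : ∀ x x', x ≠ x' → ∃ k, x ∈ B k false ∧ x' ∈ B k true) :
    ∃ k : ι → κ, FibrewiseLarge φ fun q : ι × Bool => C q.1 ∩ B (k q.1) q.2 := by
  by_contra! hsmall
  simp only [FibrewiseLarge, not_forall, not_nonempty_iff_eq_empty] at hsmall
  choose R hR hRempty using hsmall
  choose E hRE hEm hE using fun i =>
    (SigmaInjOn.iUnion fun p : (ι → κ) × Bool => hR p.1 (i, p.2)).exists_measurableSet_superset
  obtain ⟨y, hy⟩ := (hC.diff hE).exists_forall_nontrivial hφ fun i => (hCm i).diff (hEm i)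
  choose x hx x' hx' hne using hy
  choose k hk hk' using fun i => hB (x i) (x' i) (hne i)
  have hRsub : ∀ i b, R k (i, b) ⊆ E i := fun i b =>
    (subset_iUnion (fun p : (ι → κ) × Bool => R p.1 (i, p.2)) (k, b)).trans (hRE i)
  have hyk : y ∈ ⋂ q : ι × Bool, φ '' ((C q.1 ∩ B (k q.1) q.2) \ R k q) := by
    rw [mem_iInter]
    rintro ⟨i, _ | _⟩
    · exact ⟨x i, ⟨⟨(hx i).1.1, hk i⟩, fun h => (hx i).1.2 (hRsub i false h)⟩, (hx i).2⟩
    · exact ⟨x' i, ⟨⟨(hx' i).1.1, hk' i⟩, fun h => (hx' i).1.2 (hRsub i true h)⟩, (hx' i).2⟩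
  exact notMem_empty y (hRempty k ▸ hyk)

end FibrewiseLarge

theorem exists_countable_isClosed_ediam_le_separating (P : Type*) [MetricSpace P]
    [SecondCountableTopology P] {ε : ℝ≥0∞} (hε : 0 < ε) :
    ∃ 𝓑 : Set (Set P), 𝓑.Countable ∧ (∀ s ∈ 𝓑, IsClosed s) ∧ (∀ s ∈ 𝓑, Metric.ediam s ≤ ε) ∧
      ∀ x x', x ≠ x' → ∃ s ∈ 𝓑, ∃ s' ∈ 𝓑, x ∈ s ∧ x' ∈ s' ∧ Disjoint s s' := by
  refine ⟨closure '' {U ∈ countableBasis P | Metric.ediam U ≤ ε},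
    ((countable_countableBasis P).mono (sep_subset _ _)).image _,
    forall_mem_image.2 fun U _ => isClosed_closure,
    forall_mem_image.2 fun U hU => (Metric.ediam_closure U).trans_le hU.2, ?_⟩
  intro x x' hne
  have hsmall : ∀ z : P, ∀ V, IsOpen V → z ∈ V →
      ∃ U ∈ countableBasis P, Metric.ediam U ≤ ε ∧ z ∈ U ∧ U ⊆ V := by
    intro z V hV hz
    have hnhds : V ∩ Metric.eball z (ε / 2) ∈ 𝓝 z :=
      inter_mem (hV.mem_nhds hz) (Metric.eball_mem_nhds z (ENNReal.half_pos hε.ne'))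
    obtain ⟨U, hU, hzU, hUV⟩ := (isBasis_countableBasis P).mem_nhds_iff.1 hnhds
    refine ⟨U, hU, ?_, hzU, hUV.trans inter_subset_left⟩
    calc Metric.ediam U ≤ Metric.ediam (Metric.eball z (ε / 2)) :=
          Metric.ediam_mono (hUV.trans inter_subset_right)
      _ ≤ 2 * (ε / 2) := Metric.ediam_eball_le
      _ = ε := ENNReal.mul_div_cancel two_ne_zero ENNReal.ofNat_ne_top
  obtain ⟨V, hxV, hV, V', hxV', hV', hdisj⟩ := exists_open_nhds_disjoint_closure hne
  obtain ⟨U, hU, hUε, hxU, hUV⟩ := hsmall x V hV hxV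
  obtain ⟨U', hU', hUε', hxU', hUV'⟩ := hsmall x' V' hV' hxV'
  exact ⟨_, mem_image_of_mem _ ⟨hU, hUε⟩, _, mem_image_of_mem _ ⟨hU', hUε'⟩,
    subset_closure hxU, subset_closure hxU', hdisj.mono (closure_mono hUV) (closure_mono hUV')⟩

section CantorScheme

variable {P Y : Type*} [MetricSpace P] [CompleteSpace P] [TopologicalSpace Y]

theorem exists_not_countable_preimage_of_cantorScheme [T2Space Y] {φ : P → Y} (hφ : Continuous φ)
    {A : List Bool → Set P} (hclosed : ∀ l, IsClosed (A l)) (hanti : CantorScheme.Antitone A)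
    (hdisj : CantorScheme.Disjoint A) (hdiam : CantorScheme.VanishingDiam A)
    (hfibre : ∀ n, ∃ y, ∀ l : List Bool, l.length = n → y ∈ φ '' A l) :
    ∃ y, ¬ (φ ⁻¹' {y}).Countable := by
  choose y hy using hfibre
  have hdom : (CantorScheme.inducedMap A).1 = univ :=
    (hanti.closureAntitone hclosed).map_of_vanishingDiam hdiam
      fun l => (hy l.length l rfl).imp fun _ h => h.1
  let w : (ℕ → Bool) → P := fun z => (CantorScheme.inducedMap A).2 ⟨z, hdom ▸ mem_univ z⟩
  have hwinj : Function.Injective w := fun z z' h => congrArg Subtype.val (hdisj.map_injective h)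
  have hlim : ∀ z, Tendsto y atTop (𝓝 (φ (w z))) := by
    intro z
    choose u hu huy using fun n => hy n (PiNat.res z n) (PiNat.res_length z n)
    have huw : Tendsto u atTop (𝓝 (w z)) := by
      rw [tendsto_iff_edist_tendsto_0]
      exact tendsto_of_tendsto_of_tendsto_of_le_of_le tendsto_const_nhds (hdiam z)
        (fun _ => zero_le) fun n => Metric.edist_le_ediam_of_mem (hu n) (CantorScheme.map_mem _ n)
    simpa only [Function.comp_def, huy] using (hφ.tendsto _).comp huw
  let z₀ : ℕ → Bool := fun _ => false
  have : Uncountable (ℕ → Bool) := by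
    simpa [← Cardinal.aleph0_lt_mk_iff] using Cardinal.aleph0_lt_continuum
  refine ⟨φ (w z₀), fun hcount => not_countable_univ (α := ℕ → Bool) ?_⟩
  exact (hcount.preimage hwinj).mono fun z _ => tendsto_nhds_unique (hlim z) (hlim z₀)

variable [SecondCountableTopology P] [MeasurableSpace P] [BorelSpace P] [PolishSpace Y]
  [MeasurableSpace Y] [BorelSpace Y] {φ : P → Y}

theorem FibrewiseLarge.exists_split {ι : Type*} [Finite ι] {C : ι → Set P}
    (hC : FibrewiseLarge φ C) (hφ : Measurable φ) (hclosed : ∀ i, IsClosed (C i)) {ε : ℝ≥0∞}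
    (hε : 0 < ε) :
    ∃ D : ι → Bool → Set P, (FibrewiseLarge φ fun q : ι × Bool => D q.1 q.2) ∧
      (∀ i b, IsClosed (D i b)) ∧ (∀ i b, D i b ⊆ C i) ∧ (∀ i b, Metric.ediam (D i b) ≤ ε) ∧
      ∀ i, Disjoint (D i false) (D i true) := by
  obtain ⟨𝓑, hcount, hBclosed, hBdiam, hsep⟩ := exists_countable_isClosed_ediam_le_separating P hε
  have := hcount.to_subtype
  let B : {p : 𝓑 × 𝓑 // Disjoint (p.1 : Set P) p.2} → Bool → Set P :=
    fun p b => bif b then p.1.2 else p.1.1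
  have hB𝓑 : ∀ p b, B p b ∈ 𝓑 := fun p => Bool.forall_bool.2 ⟨p.1.1.2, p.1.2.2⟩
  have hBsep : ∀ x x', x ≠ x' → ∃ p, x ∈ B p false ∧ x' ∈ B p true := by
    intro x x' hne
    obtain ⟨s, hs, s', hs', hx, hx', hdisj⟩ := hsep x x' hne
    exact ⟨⟨(⟨s, hs⟩, ⟨s', hs'⟩), hdisj⟩, hx, hx'⟩
  obtain ⟨k, hk⟩ := hC.exists_inter hφ (fun i => (hclosed i).measurableSet) hBsep
  exact ⟨fun i b => C i ∩ B (k i) b, hk, fun i b => (hclosed i).inter (hBclosed _ (hB𝓑 _ b)),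
    fun i b => inter_subset_left,
    fun i b => (Metric.ediam_mono inter_subset_right).trans (hBdiam _ (hB𝓑 _ b)),
    fun i => (k i).2.mono inter_subset_right inter_subset_right⟩

theorem exists_cantorScheme_of_not_sigmaInjOn (hφ : Measurable φ) (h : ¬ SigmaInjOn φ univ) :
    ∃ A : List Bool → Set P, (∀ l, IsClosed (A l)) ∧ CantorScheme.Antitone A ∧
      CantorScheme.Disjoint A ∧ CantorScheme.VanishingDiam A ∧
      ∀ n, ∃ y, ∀ l : List Bool, l.length = n → y ∈ φ '' A l := by
  let Level (n : ℕ) := {C : List.Vector Bool n → Set P // FibrewiseLarge φ C ∧ ∀ v, IsClosed (C v)}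
  have hε : ∀ n : ℕ, 0 < (2⁻¹ : ℝ≥0∞) ^ n := fun n => ENNReal.pow_pos (by simp) n
  choose D hlarge hclosed hsub hdiam hdisj using fun (n : ℕ) (C : Level n) =>
    C.2.1.exists_split hφ C.2.2 (hε n)
  let next (n : ℕ) (C : Level n) : Level (n + 1) :=
    ⟨fun v => D n C v.tail v.head,
      (hlarge n C).comp fun v : List.Vector Bool (n + 1) => (v.tail, v.head),
      fun v => hclosed n C v.tail v.head⟩
  let F (n : ℕ) : Level n :=
    Nat.rec ⟨fun _ => univ, fibrewiseLarge_const h, fun _ => isClosed_univ⟩ next n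
  let A (l : List Bool) : Set P := (F l.length).1 ⟨l, rfl⟩
  have hAdiam : ∀ l b, Metric.ediam (A (b :: l)) ≤ 2⁻¹ ^ l.length := fun _ _ => hdiam _ _ _ _
  refine ⟨A, fun l => (F l.length).2.2 _, fun l b => hsub _ _ _ b, ?_, ?_, ?_⟩
  · intro l
    have hl := hdisj _ (F l.length) ⟨l, rfl⟩
    rintro (_ | _) (_ | _) hne
    exacts [(hne rfl).elim, hl, hl.symm, (hne rfl).elim]
  · intro z
    rw [← tendsto_add_atTop_iff_nat 1]
    refine tendsto_of_tendsto_of_tendsto_of_le_of_le tendsto_const_nhds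
      (ENNReal.tendsto_pow_atTop_nhds_zero_of_lt_one ENNReal.one_half_lt_one)
      (fun _ => zero_le) fun n => ?_
    simpa only [PiNat.res_succ, PiNat.res_length] using hAdiam (PiNat.res z n) (z n)
  · intro n
    obtain ⟨y, hy⟩ := (F n).2.1.nonempty
    refine ⟨y, ?_⟩
    rintro l rfl
    exact mem_iInter.1 hy ⟨l, rfl⟩

theorem sigmaInjOn_univ_of_continuous (hφ : Continuous φ) (hcount : ∀ y, (φ ⁻¹' {y}).Countable) :
    SigmaInjOn φ univ := by
  by_contra h
  obtain ⟨A, hclosed, hanti, hdisj, hdiam, hfibre⟩ :=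
    exists_cantorScheme_of_not_sigmaInjOn hφ.measurable h
  obtain ⟨y, hy⟩ :=
    exists_not_countable_preimage_of_cantorScheme hφ hclosed hanti hdisj hdiam hfibre
  exact hy (hcount y)

end CantorScheme

section StandardBorel

variable {P Y : Type*} [MeasurableSpace P] [StandardBorelSpace P] [MeasurableSpace Y]
  [MeasurableSpace.CountablySeparated Y] {φ : P → Y}

theorem sigmaInjOn_univ_of_countable_preimage (hφ : Measurable φ)
    (hcount : ∀ y, (φ ⁻¹' {y}).Countable) : SigmaInjOn φ univ := by
  obtain ⟨g, hg, hginj⟩ := MeasurableSpace.measurable_injection_nat_bool_of_countablySeparated Y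
  have : PolishSpace (ℕ → Bool) := { }
  have hcountg : ∀ z, ((g ∘ φ) ⁻¹' {z}).Countable := by
    intro z
    obtain hz | ⟨x, rfl⟩ := ((g ∘ φ) ⁻¹' {z}).eq_empty_or_nonempty
    · exact hz ▸ countable_empty
    · exact (hcount (φ x)).mono fun x' hx' => hginj hx'
  let hP := upgradeStandardBorel P
  obtain ⟨t, hle, hcont, ht⟩ := (hg.comp hφ).exists_continuous
  have hborel : @BorelSpace P t _ := by
    constructor
    rw [borel_eq_borel_of_le ht hP.toPolishSpace hle]
    exact BorelSpace.measurable_eq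
  clear hle
  let := t
  let := upgradeIsCompletelyMetrizable P
  exact (sigmaInjOn_univ_of_continuous hcont hcountg).of_comp

theorem exists_seq_measurableSet_injOn_iUnion_eq {A : Set P} (hA : MeasurableSet A)
    (hφ : Measurable φ) (hcount : ∀ y, (A ∩ φ ⁻¹' {y}).Countable) :
    ∃ B : ℕ → Set P, (∀ n, MeasurableSet (B n)) ∧ (∀ n, InjOn φ (B n)) ∧ ⋃ n, B n = A := by
  have := hA.standardBorel
  have hcountA : ∀ y, ((φ ∘ ((↑) : A → P)) ⁻¹' {y}).Countable := by
    refine fun y => ((hcount y).preimage Subtype.val_injective).mono ?_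
    rintro a rfl
    exact mem_preimage.2 ⟨a.2, rfl⟩
  obtain ⟨B, hBm, hBi, hB⟩ :=
    sigmaInjOn_univ_of_countable_preimage (hφ.comp measurable_subtype_coe) hcountA
  refine ⟨fun n => (↑) '' B n, fun n => hA.subtype_image (hBm n),
    fun n => (hBi n).image_of_comp, ?_⟩
  rw [← image_iUnion, univ_subset_iff.1 hB, image_univ, Subtype.range_coe]

end StandardBorel

end LusinNovikov

theorem uniformly_sigmaFinite_of_measurable_purely_atomic_general
    {X Y : Type*} [MeasurableSpace X] [StandardBorelSpace X]
    [MeasurableSpace Y] [MeasurableSpace.CountablySeparated Y]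
    {φ : X → Y} (hφ : Measurable φ) {μy : Y → Measure X} [∀ y, SigmaFinite (μy y)]
    (hconc : ∀ y, μy y (φ ⁻¹' {y})ᶜ = 0)
    (hatomic : ∀ y, μy y {x | 0 < μy y {x}}ᶜ = 0)
    (hatom : Measurable fun x => μy (φ x) {x}) :
    ∃ B : ℕ → Set X, (∀ n, MeasurableSet (B n)) ∧
      (∀ n, ∀ y, μy y (B n) < ⊤) ∧
      (∀ y, μy y (⋃ n, B n)ᶜ = 0) := by
  have hA : MeasurableSet {x | 0 < μy (φ x) {x}} := measurableSet_lt measurable_const hatom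
  have hcount : ∀ y, ({x | 0 < μy (φ x) {x}} ∩ φ ⁻¹' {y}).Countable := by
    intro y
    refine (Measure.countable_meas_pos_of_disjoint_iUnion (μ := μy y) measurableSet_singleton
      fun x x' => Set.disjoint_singleton.2).mono ?_
    rintro x ⟨hx, rfl⟩
    exact hx
  obtain ⟨B, hBm, hBi, hB⟩ := exists_seq_measurableSet_injOn_iUnion_eq hA hφ hcount
  refine ⟨B, hBm, fun n y => ?_, fun y => ?_⟩
  · have hsub : (B n \ (φ ⁻¹' {y})ᶜ).Subsingleton := by
      rw [Set.sdiff_compl]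
      rintro x ⟨hx, rfl⟩ x' ⟨hx', hxx'⟩
      exact hBi n hx hx' hxx'.symm
    rw [← measure_sdiff_null (hconc y)]
    obtain hempty | ⟨x, hx⟩ := hsub.eq_empty_or_singleton
    · simp [hempty]
    · exact hx ▸ measure_singleton_lt_top
  · refine measure_mono_null ?_ (measure_union_null (hatomic y) (hconc y))
    rw [hB, ← Set.compl_inter, Set.compl_subset_compl]
    rintro x ⟨hx, rfl⟩
    exact hx

/-- If `{μy y}` is a σ-finite disintegration of `μ` with respect to `(ν, φ)` into purely
atomic measures, and the map `(y, K) ↦ μy y K` on `Y × K(X)` is Borel measurable, then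
`{μy y}` is uniformly σ-finite. -/
theorem uniformly_sigmaFinite_of_measurable_purely_atomic
    {X Y : Type*} [MetricSpace X] [PolishSpace X]
    [MeasurableSpace X] [BorelSpace X]
    [MeasurableSpace Y] [StandardBorelSpace Y]
    [MeasurableSpace (NonemptyCompacts X)] [BorelSpace (NonemptyCompacts X)]
    (φ : X → Y) (hφ : Measurable φ)
    (μ : Measure X) (ν : Measure Y) (μy : Y → Measure X)
    (hmeas : ∀ B : Set X, MeasurableSet B → Measurable fun y => μy y B)
    (hconc : ∀ y : Y, μy y ((φ ⁻¹' {y})ᶜ) = 0)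
    (hint : ∀ B : Set X, MeasurableSet B → μ B = ∫⁻ y, μy y B ∂ν)
    (hsf : ∀ y : Y, SigmaFinite (μy y))
    (hatomset : ∀ y : Y, ({x : X | 0 < μy y {x}}).Countable)
    (hatomic : ∀ y : Y, μy y ({x : X | 0 < μy y {x}}ᶜ) = 0)
    (hjoint : Measurable fun p : Y × NonemptyCompacts X => μy p.1 (p.2 : Set X)) :
    ∃ B : ℕ → Set X, (∀ n, MeasurableSet (B n)) ∧
      (∀ n, ∀ y : Y, μy y (B n) < ⊤) ∧
      (∀ y : Y, μy y ((⋃ n, B n)ᶜ) = 0) := by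
  exact uniformly_sigmaFinite_of_measurable_purely_atomic_general hφ hconc hatomic <|
    hjoint.comp (hφ.prodMk NonemptyCompacts.continuous_singleton.measurable)
end
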